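/- Let G be a cactus graph on n vertices with k cycles. If G is not girth restricted (i.e. G has a cycle of length at least 5), then there exists a girth restricted cactus graph G′ on n vertices with k cycles such that gpn(G′) > gpn(G). -/

import Mathlib

/-!
If a cactus `G` has a cycle `c` of length `l ≥ 5`, one can change `G` so that it stays a cactus with
the same number of cycles and so that `gpn` grows. Removing the edges of `c` leaves a graph `H` with
exactly one vertex of `c` in each component (`exists_isGlued_of_isCycle`), so `G` arises from `H` by
joining these `l` roots by the cycle graph `cyc l`. Join them instead by a graph `K` consisting of a
square, with the remaining `l - 4` vertices pendant at two opposite corners, arranged so that any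
two antipodal vertices of the cycle are attached to opposite corners.

In a graph glued in this way the number of geodesics between two vertices of different pieces is the
product of the numbers of geodesics to the roots and between the roots
(`IsGlued.dist_and_numGeodesics`), and the cycles are those of `H` and of the joining graph
(`IsGlued.mem_cycleEdgeSets_iff`). The cycle `cyc l` has two geodesics between antipodal vertices
and one between any others; in `K` there is always at least one, and there are at least two between
vertices attached to opposite corners. So no number of geodesics drops, and as `l ≥ 5` some
non-antipodal pair is attached to opposite corners and gains a geodesic
(`exists_unicyclic_more_geodesics`). Hence `gpn` grows strictly.

The improved cactus may still have long cycles, but there are only finitely many graphs on `V`: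
among the cacti with `k` cycles, one with maximal `gpn` cannot be improved, so it is girth
restricted, and its `gpn` exceeds that of `G` as `G` can be improved.

Both formulas for geodesics, in glued graphs and in cycles, are verified through the recursion over
the first step of a geodesic, which determines distances and numbers of geodesics simultaneously
(`dist_and_numGeodesics_of_rec`).
-/

open SimpleGraph

/-- The number of geodesics (shortest paths) in `G` between `u` and `v`. -/
noncomputable def numGeodesics {V : Type*} (G : SimpleGraph V) (u v : V) : ℕ :=
  {p : G.Walk u v | p.IsPath ∧ p.length = G.dist u v}.ncard

lemma numGeodesics_comm {V : Type*} (G : SimpleGraph V) (u v : V) :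
    numGeodesics G u v = numGeodesics G v u := by
  have himg : {p : G.Walk v u | p.IsPath ∧ p.length = G.dist v u} =
      (fun p : G.Walk u v => p.reverse) '' {p : G.Walk u v | p.IsPath ∧ p.length = G.dist u v} := by
    ext p
    constructor
    · rintro ⟨hp, hl⟩
      exact ⟨p.reverse, ⟨hp.reverse, by
        rw [SimpleGraph.Walk.length_reverse, hl, SimpleGraph.dist_comm]⟩, p.reverse_reverse⟩
    · rintro ⟨q, ⟨hq, hl⟩, rfl⟩
      exact ⟨hq.reverse, by rw [SimpleGraph.Walk.length_reverse, hl, SimpleGraph.dist_comm]⟩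
  have hinj : Function.Injective (fun p : G.Walk u v => p.reverse) := by
    intro p q h
    simpa using congrArg SimpleGraph.Walk.reverse h
  unfold numGeodesics
  rw [himg, Set.ncard_image_of_injective _ hinj]

/-- The geodesic subpath number of a finite graph: the sum, over unordered pairs of
distinct vertices, of the number of geodesics between them, plus `n` for the `n`
geodesics of length zero. -/
noncomputable def gpn {V : Type*} [Fintype V] [DecidableEq V] (G : SimpleGraph V) : ℕ :=
  (∑ e ∈ Finset.univ.filter (fun e : Sym2 V => ¬ e.IsDiag),
      Sym2.lift ⟨fun u v => numGeodesics G u v, fun u v => numGeodesics_comm G u v⟩ e)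
    + Fintype.card V

/-- The cycles of `G`, recorded as their edge sets. -/
def cycleEdgeSets {V : Type*} (G : SimpleGraph V) : Set (Set (Sym2 V)) :=
  {s | ∃ (u : V) (c : G.Walk u u), c.IsCycle ∧ s = {e | e ∈ c.edges}}

/-- A cactus graph: a connected graph in which all cycles are pairwise edge-disjoint. -/
def IsCactus {V : Type*} (G : SimpleGraph V) : Prop :=
  G.Connected ∧ (cycleEdgeSets G).Pairwise Disjoint

/-- A girth restricted cactus graph: every cycle is a triangle or a square. -/
def IsGirthRestricted {V : Type*} (G : SimpleGraph V) : Prop :=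
  ∀ (u : V) (c : G.Walk u u), c.IsCycle → c.length = 3 ∨ c.length = 4

/-! ### Counting geodesics -/

section Geodesics

variable {V : Type*}

lemma numGeodesics_eq_ncard_length (G : SimpleGraph V) (u v : V) :
    numGeodesics G u v = {p : G.Walk u v | p.length = G.dist u v}.ncard := by
  unfold numGeodesics
  congr 1
  ext p
  exact ⟨fun h => h.2, fun h => ⟨p.isPath_of_length_eq_dist h, h⟩⟩

lemma dist_le_dist_add_one {G : SimpleGraph V} {x w : V} (h : G.Adj x w) (y : V) :
    G.dist x y ≤ G.dist w y + 1 := by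
  have := h.reachable.dist_triangle_left y
  rw [SimpleGraph.dist_eq_one_iff_adj.2 h] at this
  omega

variable [Fintype V]

open Classical in
lemma numGeodesics_eq_adjMatrix_pow (G : SimpleGraph V) (u v : V) :
    numGeodesics G u v = (G.adjMatrix ℕ ^ G.dist u v) u v := by
  rw [numGeodesics_eq_ncard_length, SimpleGraph.adjMatrix_pow_apply_eq_card_walk,
    ← Nat.card_coe_set_eq, Nat.card_eq_fintype_card]
  simp

open Classical in
lemma numGeodesics_self (G : SimpleGraph V) (v : V) : numGeodesics G v v = 1 := by
  simp [numGeodesics_eq_adjMatrix_pow]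

open Classical in
lemma numGeodesics_pos (G : SimpleGraph V) {u v : V} (h : G.Reachable u v) :
    0 < numGeodesics G u v := by
  obtain ⟨p, hp⟩ := h.exists_walk_length_eq_dist
  rw [numGeodesics_eq_adjMatrix_pow, SimpleGraph.adjMatrix_pow_apply_eq_card_walk]
  simpa using ⟨p, by simpa [SimpleGraph.mem_finsetWalkLength_iff] using hp⟩

open Classical in
/-- Splitting geodesics from `x` to `y` according to their first step. -/
lemma numGeodesics_rec (G : SimpleGraph V) {x y : V} (hxy : x ≠ y) (h : G.Reachable x y) :
    numGeodesics G x y =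
      ∑ w with G.Adj x w ∧ G.dist w y + 1 = G.dist x y, numGeodesics G w y := by
  obtain ⟨n, hn⟩ : ∃ n, G.dist x y = n + 1 :=
    Nat.exists_eq_succ_of_ne_zero (h.pos_dist_of_ne hxy).ne'
  rw [numGeodesics_eq_adjMatrix_pow, hn, pow_succ', Matrix.mul_apply, Finset.sum_filter]
  refine Finset.sum_congr rfl fun w _ => ?_
  by_cases hw : G.Adj x w
  · by_cases hd : G.dist w y = n
    · simp [hw, hd, numGeodesics_eq_adjMatrix_pow]
    · have hlt : n < G.dist w y := by
        have := dist_le_dist_add_one hw y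
        omega
      have : (G.adjMatrix ℕ ^ n) w y = 0 := by
        rw [SimpleGraph.adjMatrix_pow_apply_eq_card_walk]
        simp only [Nat.cast_id, Fintype.card_eq_zero_iff]
        exact ⟨fun p => by
          have := SimpleGraph.dist_le p.1
          have h2 : p.1.length = n := p.2
          omega⟩
      simp [hd, this]
  · simp [hw]

lemma exists_adj_dist_add_one {G : SimpleGraph V} {x y : V} (hxy : x ≠ y)
    (h : G.Reachable x y) : ∃ w, G.Adj x w ∧ G.dist w y + 1 = G.dist x y := by
  classical
  by_contra hc
  push Not at hc
  have := numGeodesics_pos G h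
  rw [numGeodesics_rec G hxy h, Finset.filter_false_of_mem (fun w _ hw => hc w hw.1 hw.2)] at this
  simp at this

open Classical in
/-- The recursion over first steps determines both the distance to `y` and the number of
geodesics to `y`: any pair `(f, N)` satisfying it is this pair. -/
lemma dist_and_numGeodesics_of_rec (G : SimpleGraph V) (y : V) (f N : V → ℕ)
    (hfy : f y = 0) (hNy : N y = 1)
    (hlip : ∀ x w, G.Adj x w → f x ≤ f w + 1)
    (hdec : ∀ x, x ≠ y → ∃ w, G.Adj x w ∧ f w + 1 = f x)
    (hN : ∀ x, x ≠ y → N x = ∑ w with G.Adj x w ∧ f w + 1 = f x, N w) (x : V) :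
    G.dist x y = f x ∧ numGeodesics G x y = N x := by
  have hle : ∀ {a b : V} (p : G.Walk a b), f a ≤ f b + p.length := by
    intro a b p
    induction p with
    | nil => simp
    | cons h p ih =>
      have := hlip _ _ h
      simp only [SimpleGraph.Walk.length_cons]
      omega
  have hwalk : ∀ n x, f x = n → ∃ p : G.Walk x y, p.length = n := by
    intro n
    induction n with
    | zero =>
      intro x hx
      by_cases hxy : x = y
      · subst hxy
        exact ⟨.nil, rfl⟩
      · obtain ⟨w, -, h⟩ := hdec x hxy
        omega
    | succ n ih =>
      intro x hx
      have hxy : x ≠ y := by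
        rintro rfl
        omega
      obtain ⟨w, hw, h⟩ := hdec x hxy
      obtain ⟨p, hp⟩ := ih w (by omega)
      exact ⟨.cons hw p, by simp [hp]⟩
  have hreach : ∀ x, G.Reachable x y := fun x => (hwalk _ x rfl).choose.reachable
  have hdist : ∀ x, G.dist x y = f x := by
    intro x
    apply le_antisymm
    · obtain ⟨p, hp⟩ := hwalk _ x rfl
      exact hp ▸ SimpleGraph.dist_le p
    · obtain ⟨p, hp⟩ := (hreach x).exists_walk_length_eq_dist
      have := hle p
      omega
  refine ⟨hdist x, ?_⟩
  induction hn : f x using Nat.strong_induction_on generalizing x with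
  | _ n ih =>
    by_cases hxy : x = y
    · subst hxy
      rw [numGeodesics_self, hNy]
    · rw [numGeodesics_rec G hxy (hreach x), hN x hxy]
      simp only [hdist]
      refine Finset.sum_congr rfl fun w hw => ih (f w) ?_ w rfl
      have := (Finset.mem_filter.1 hw).2.2
      omega

end Geodesics

/-! ### Gluing rooted graphs along a graph on their roots -/

/-- `IsGlued G H K r c`: the graph `G` on `V` arises from the graph `H` by joining its pieces
along the graph `K` on `ι`. The map `c` sends a vertex to the index of its piece, every piece
`c ⁻¹' {i}` is a connected component of `H` with root `r i`, and the edges of `G` outside `H`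
are the images under `r` of the edges of `K`. -/
structure IsGlued {V ι : Type*} (G H : SimpleGraph V) (K : SimpleGraph ι) (r : ι → V)
    (c : V → ι) : Prop where
  root : ∀ i, c (r i) = i
  col : ∀ x y, H.Adj x y → c x = c y
  reach : ∀ x, H.Reachable x (r (c x))
  adj : ∀ x y, G.Adj x y ↔ H.Adj x y ∨ (K.Adj (c x) (c y) ∧ x = r (c x) ∧ y = r (c y))
  conn : K.Connected

namespace IsGlued

variable {V ι : Type*} {G H : SimpleGraph V} {K : SimpleGraph ι} {r : ι → V} {c : V → ι}

/-- The graph glued from `H` and `K`. -/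
lemma exists_glued {H : SimpleGraph V} {K : SimpleGraph ι} {r : ι → V} {c : V → ι}
    (root : ∀ i, c (r i) = i) (col : ∀ x y, H.Adj x y → c x = c y)
    (reach : ∀ x, H.Reachable x (r (c x))) (conn : K.Connected) :
    ∃ G : SimpleGraph V, IsGlued G H K r c :=
  ⟨{ Adj := fun x y => H.Adj x y ∨ (K.Adj (c x) (c y) ∧ x = r (c x) ∧ y = r (c y))
     symm := ⟨fun _ _ h => h.imp (fun h => h.symm) fun h => ⟨h.1.symm, h.2.2, h.2.1⟩⟩
     loopless := ⟨fun _ h => h.elim (fun h => h.ne rfl) fun h => h.1.ne rfl⟩ },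
    root, col, reach, fun _ _ => Iff.rfl, conn⟩

lemma le (g : IsGlued G H K r c) : H ≤ G := fun _ _ h => (g.adj _ _).2 (.inl h)

lemma injective (g : IsGlued G H K r c) : Function.Injective r := fun i j h => by
  rw [← g.root i, ← g.root j, h]

lemma adj_root (g : IsGlued G H K r c) {i j : ι} (h : K.Adj i j) : G.Adj (r i) (r j) :=
  (g.adj _ _).2 (.inr (by simpa [g.root] using h))

/-- `r` as an injective graph homomorphism. -/
def hom (g : IsGlued G H K r c) : K →g G := ⟨r, fun h => g.adj_root h⟩

lemma reach_of_eq (g : IsGlued G H K r c) {x y : V} (h : c x = c y) : H.Reachable x y :=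
  (g.reach x).trans (h ▸ (g.reach y).symm)

lemma connected (g : IsGlued G H K r c) : G.Connected := by
  have := g.conn.nonempty
  refine (SimpleGraph.connected_iff _).2 ⟨fun x y => ?_, this.map r⟩
  have h1 := ((g.conn (c x) (c y)).map g.hom)
  exact ((g.reach x).mono g.le).trans (h1.trans ((g.reach y).mono g.le).symm)

variable [Fintype V] [Fintype ι]

/-- The distance and the number of geodesics in a glued graph: a geodesic between two pieces
runs to the root of its piece in `H`, between the roots along `K`, and from the root in `H`. -/
lemma dist_and_numGeodesics [DecidableEq ι] (g : IsGlued G H K r c) (x y : V) :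
    G.dist x y = (if c x = c y then H.dist x y
      else H.dist x (r (c x)) + K.dist (c x) (c y) + H.dist (r (c y)) y) ∧
    numGeodesics G x y = (if c x = c y then numGeodesics H x y
      else numGeodesics H x (r (c x)) * numGeodesics K (c x) (c y) *
        numGeodesics H (r (c y)) y) := by
  classical
  set f : V → ℕ := fun x => if c x = c y then H.dist x y
      else H.dist x (r (c x)) + K.dist (c x) (c y) + H.dist (r (c y)) y with hf
  set N : V → ℕ := fun x => if c x = c y then numGeodesics H x y
      else numGeodesics H x (r (c x)) * numGeodesics K (c x) (c y) *
        numGeodesics H (r (c y)) y with hN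
  have frt : ∀ i, f (r i) = K.dist i (c y) + H.dist (r (c y)) y := by
    intro i
    by_cases h : i = c y
    · simp [hf, g.root, h]
    · simp [hf, g.root, h]
  have Nrt : ∀ i, N (r i) = numGeodesics K i (c y) * numGeodesics H (r (c y)) y := by
    intro i
    by_cases h : i = c y
    · simp [hN, g.root, h, numGeodesics_self]
    · simp [hN, g.root, h, numGeodesics_self]
  have fsame : ∀ x, c x = c y → f x = H.dist x y := fun x h => by simp [hf, h]
  have fdiff : ∀ x, c x ≠ c y →
      f x = H.dist x (r (c x)) + K.dist (c x) (c y) + H.dist (r (c y)) y :=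
    fun x h => by simp [hf, h]
  have Nsame : ∀ x, c x = c y → N x = numGeodesics H x y := fun x h => by simp [hN, h]
  have Ndiff : ∀ x, c x ≠ c y →
      N x = numGeodesics H x (r (c x)) * numGeodesics K (c x) (c y) *
        numGeodesics H (r (c y)) y :=
    fun x h => by simp [hN, h]
  refine dist_and_numGeodesics_of_rec G y f N (by simp [hf]) (by simp [hN, numGeodesics_self])
    ?_ ?_ ?_ x
  · intro x w hxw
    rcases (g.adj x w).1 hxw with h | ⟨h, hx, hw⟩
    · have hc := g.col _ _ h
      by_cases hy : c x = c y
      · rw [fsame x hy, fsame w (hc ▸ hy)]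
        exact dist_le_dist_add_one h y
      · rw [fdiff x hy, fdiff w (hc ▸ hy), hc]
        have := dist_le_dist_add_one h (r (c w))
        omega
    · rw [hx, hw, frt, frt]
      have := dist_le_dist_add_one h (c y)
      omega
  · intro x hxy
    by_cases hy : c x = c y
    · obtain ⟨w, hw, h⟩ := exists_adj_dist_add_one hxy (g.reach_of_eq hy)
      exact ⟨w, g.le hw, by rw [fsame x hy, fsame w (g.col _ _ hw ▸ hy), h]⟩
    · by_cases hx : x = r (c x)
      · obtain ⟨j, hj, h⟩ := exists_adj_dist_add_one hy (g.conn (c x) (c y))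
        refine ⟨r j, hx ▸ g.adj_root hj, ?_⟩
        rw [hx, frt, frt]
        omega
      · obtain ⟨w, hw, h⟩ := exists_adj_dist_add_one hx (g.reach x)
        refine ⟨w, g.le hw, ?_⟩
        have hc := g.col _ _ hw
        rw [fdiff x hy, fdiff w (hc ▸ hy), ← hc]
        omega
  · intro x hxy
    by_cases hy : c x = c y
    · rw [Nsame x hy, numGeodesics_rec H hxy (g.reach_of_eq hy)]
      refine (Finset.sum_congr ?_ ?_).symm
      · ext w
        simp only [Finset.mem_filter, Finset.mem_univ, true_and]
        refine Iff.symm ⟨?_, ?_⟩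
        · rintro ⟨hw, h⟩
          exact ⟨g.le hw, by rw [fsame x hy, fsame w (g.col _ _ hw ▸ hy), h]⟩
        · rintro ⟨hw, h⟩
          rcases (g.adj x w).1 hw with hw | ⟨hK, hx, hw⟩
          · rw [fsame x hy, fsame w (g.col _ _ hw ▸ hy)] at h
            exact ⟨hw, h⟩
          · -- a step along `K` leaves the piece of `y` and increases the distance
            rw [hw, frt, hx, frt, hy] at h
            simp at h
            omega
      · intro w hw
        rw [Nsame w (g.col _ _ (Finset.mem_filter.1 hw).2.1 ▸ hy)]
    · by_cases hx : x = r (c x)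
      · have key : (Finset.univ.filter fun w => G.Adj x w ∧ f w + 1 = f x) =
            (Finset.univ.filter fun j => K.Adj (c x) j ∧
              K.dist j (c y) + 1 = K.dist (c x) (c y)).image r := by
          ext w
          simp only [Finset.mem_filter, Finset.mem_univ, true_and, Finset.mem_image]
          constructor
          · rintro ⟨hw, h⟩
            rcases (g.adj x w).1 hw with hw | ⟨hK, hx, hw⟩
            · -- a step inside the piece of `x` leaves the root and increases the distance
              have hc := g.col _ _ hw
              rw [fdiff w (hc ▸ hy), fdiff x hy, ← hc, ← hx] at h
              simp at h
              omega
            · refine ⟨c w, ⟨hK, ?_⟩, hw.symm⟩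
              rw [hw, hx, frt, frt] at h
              omega
          · rintro ⟨j, ⟨hj, h⟩, rfl⟩
            refine ⟨hx ▸ g.adj_root hj, ?_⟩
            rw [hx, frt, frt]
            omega
        rw [key, Finset.sum_image fun i _ j _ h => g.injective h]
        simp only [Nrt]
        rw [← Finset.sum_mul, ← numGeodesics_rec K hy (g.conn _ _), hx, Nrt, g.root]
      · rw [Ndiff x hy, numGeodesics_rec H hx (g.reach x), Finset.sum_mul, Finset.sum_mul]
        refine (Finset.sum_congr ?_ ?_).symm
        · ext w
          simp only [Finset.mem_filter, Finset.mem_univ, true_and]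
          refine Iff.symm ⟨?_, ?_⟩
          · rintro ⟨hw, h⟩
            have hc := g.col _ _ hw
            exact ⟨g.le hw, by rw [fdiff x hy, fdiff w (hc ▸ hy), ← hc]; omega⟩
          · rintro ⟨hw, h⟩
            rcases (g.adj x w).1 hw with hw | ⟨hK, hx', hw⟩
            · have hc := g.col _ _ hw
              rw [fdiff x hy, fdiff w (hc ▸ hy), ← hc] at h
              exact ⟨hw, by omega⟩
            · exact absurd hx' hx
        · intro w hw
          have hc := g.col _ _ (Finset.mem_filter.1 hw).2.1
          rw [Ndiff w (hc ▸ hy), ← hc]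

end IsGlued

/-! ### Cycles of a glued graph -/

namespace IsGlued

variable {V ι : Type*} {G H : SimpleGraph V} {K : SimpleGraph ι} {r : ι → V} {c : V → ι}

/-- A piece can only be entered through its root. -/
lemma root_mem_support (g : IsGlued G H K r c) {x y : V} (p : G.Walk x y) (h : c x ≠ c y) :
    r (c y) ∈ p.support := by
  induction p with
  | nil => exact absurd rfl h
  | @cons x w y hw p ih =>
    rw [SimpleGraph.Walk.support_cons, List.mem_cons]
    by_cases hc : c w = c y
    · rcases (g.adj _ _).1 hw with hH | ⟨-, -, h'⟩
      · exact absurd ((g.col _ _ hH).trans hc) h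
      · exact .inr (by rw [← hc, ← h']; exact p.start_mem_support)
    · exact .inr (ih hc)

/-- A path with both ends in one piece stays there: it would have to use the root twice. -/
lemma col_eq_of_mem_support (g : IsGlued G H K r c) {x y : V} (p : G.Walk x y) (hp : p.IsPath)
    (h : c x = c y) : ∀ z ∈ p.support, c z = c y := by
  induction p with
  | nil => simp
  | @cons x w y hw p ih =>
    rw [SimpleGraph.Walk.cons_isPath_iff] at hp
    have hc : c w = c y := by
      by_contra hc
      rcases (g.adj _ _).1 hw with hH | ⟨-, h', -⟩
      · exact hc ((g.col _ _ hH).symm.trans h)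
      · apply hp.2
        rw [h', h]
        exact g.root_mem_support p hc
    intro z hz
    rw [SimpleGraph.Walk.support_cons, List.mem_cons] at hz
    rcases hz with rfl | hz
    · exact h
    · exact ih hp.1 hc z hz

lemma adj_of_col_eq (g : IsGlued G H K r c) {x y : V} (h : G.Adj x y) (hc : c x = c y) :
    H.Adj x y :=
  ((g.adj x y).1 h).resolve_right fun hK => hK.1.ne hc

/-- A cycle based at `a` with an edge of `H` at `a` stays in the piece of `a`. -/
lemma col_eq_of_isCycle_start (g : IsGlued G H K r c) {a b : V} (q : G.Walk a a)
    (hq : q.IsCycle) (hb : s(a, b) ∈ q.edges) (hab : H.Adj a b) :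
    ∀ z ∈ q.support, c z = c a := by
  cases q with
  | nil => simp
  | @cons _ w _ hw p =>
    rw [SimpleGraph.Walk.cons_isCycle_iff] at hq
    by_cases hc : c w = c a
    · intro z hz
      rw [SimpleGraph.Walk.support_cons, List.mem_cons] at hz
      rcases hz with rfl | hz
      · rfl
      · exact g.col_eq_of_mem_support p hq.1 hc z hz
    · exfalso
      rw [SimpleGraph.Walk.edges_cons, List.mem_cons] at hb
      rcases hb with hb | hb
      · have : b = w := by
          have := hab.ne
          aesop
        exact hc (this ▸ (g.col _ _ hab).symm)
      · -- the cycle leaves the piece of `a` by its first edge and returns by its last edge, which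
        -- lies in `H`; so it passes through the root `a` of this piece a second time
        have hpen : b = p.penultimate := hq.1.eq_penultimate_of_mem_edges hb
        have hnil : ¬ p.Nil := by
          intro h
          exact hc (by rw [h.eq])
        have ha : a = r (c a) := by
          rcases (g.adj _ _).1 hw with hH | ⟨-, h', -⟩
          · exact absurd (g.col _ _ hH).symm hc
          · exact h'
        have hbc : c a = c p.penultimate := hpen ▸ g.col _ _ hab
        have hmem : a ∈ p.dropLast.support := by
          have := g.root_mem_support p.dropLast (hbc ▸ hc)
          rwa [← hbc, ← ha] at this
        have hnd := hq.1.support_nodup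
        rw [← SimpleGraph.Walk.support_dropLast_concat hnil] at hnd
        exact (List.nodup_append.1 hnd).2.2 a hmem a (by simp) rfl

/-- A cycle with an edge in `H` is a cycle of `H`. -/
lemma isCycle_edges_subset (g : IsGlued G H K r c) {u : V} (q : G.Walk u u) (hq : q.IsCycle)
    {e : Sym2 V} (he : e ∈ q.edges) (heH : e ∈ H.edgeSet) : ∀ e ∈ q.edges, e ∈ H.edgeSet := by
  classical
  induction e with
  | _ a b =>
    have ha : a ∈ q.support := q.fst_mem_support_of_mem_edges he
    have hperm := (q.rotate_edges a ha).perm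
    have key := g.col_eq_of_isCycle_start (q.rotate a ha) (hq.rotate ha)
      (hperm.mem_iff.2 he) heH
    intro e he'
    induction e with
    | _ x y =>
      have h' := hperm.mem_iff.2 he'
      have hx := key x ((q.rotate a ha).fst_mem_support_of_mem_edges h')
      have hy := key y ((q.rotate a ha).snd_mem_support_of_mem_edges h')
      exact g.adj_of_col_eq (q.adj_of_mem_edges he') (hx.trans hy.symm)

/-- A walk between roots without edges in `H` is the image of a walk in `K`. -/
lemma exists_walk_map (g : IsGlued G H K r c) {x y : V} (p : G.Walk x y)
    (hp : ∀ e ∈ p.edges, e ∉ H.edgeSet) (i j : ι) (hi : r i = x) (hj : r j = y) :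
    ∃ q : K.Walk i j, (q.map g.hom).copy hi hj = p := by
  induction p generalizing i with
  | nil =>
    have : i = j := g.injective (hi.trans hj.symm)
    subst this
    subst hi
    exact ⟨.nil, rfl⟩
  | @cons x w y hw p ih =>
    subst hi
    obtain ⟨k, hk, rfl⟩ : ∃ k, K.Adj i k ∧ r k = w := by
      have hK := ((g.adj _ _).1 hw).resolve_left (hp s(_, _) (by simp))
      exact ⟨c w, by simpa only [g.root] using hK.1, hK.2.2.symm⟩
    obtain ⟨q, hq⟩ := ih (fun e he => hp e (by simp [he])) k rfl hj
    refine ⟨.cons hk q, ?_⟩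
    subst hj
    subst hq
    rfl

/-- The cycles of a glued graph are those of `H` and those of `K`. -/
lemma mem_cycleEdgeSets_iff (g : IsGlued G H K r c) (s : Set (Sym2 V)) :
    s ∈ cycleEdgeSets G ↔
      s ∈ cycleEdgeSets H ∨ ∃ t ∈ cycleEdgeSets K, s = Sym2.map r '' t := by
  constructor
  · rintro ⟨u, q, hq, rfl⟩
    by_cases h : ∃ e ∈ q.edges, e ∈ H.edgeSet
    · obtain ⟨e, he, heH⟩ := h
      have := g.isCycle_edges_subset q hq he heH
      exact .inl ⟨u, q.transfer H this, hq.transfer this, by simp⟩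
    · push Not at h
      obtain ⟨i, rfl⟩ : ∃ i, r i = u := by
        cases q with
        | nil => simp at hq
        | cons hw p =>
          exact ⟨_, (((g.adj _ _).1 hw).resolve_left (h s(_, _) (by simp))).2.1.symm⟩
      obtain ⟨q', hq'⟩ := g.exists_walk_map q h i i rfl rfl
      replace hq' : q'.map g.hom = q := hq'
      subst hq'
      refine .inr ⟨_, ⟨i, q', ?_, rfl⟩, ?_⟩
      · exact (SimpleGraph.Walk.isCycle_map_iff_of_injective g.injective).1 hq
      · ext e
        simp [SimpleGraph.Walk.edges_map, hom]
  · rintro (⟨u, q, hq, rfl⟩ | ⟨_, ⟨i, q, hq, rfl⟩, rfl⟩)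
    · exact ⟨u, q.mapLe g.le, hq.mapLe g.le, by simp⟩
    · refine ⟨r i, q.map g.hom, hq.map g.injective, ?_⟩
      ext e
      simp [SimpleGraph.Walk.edges_map, hom]

lemma map_notMem_edgeSet (g : IsGlued G H K r c) {e : Sym2 ι} (he : e ∈ K.edgeSet) :
    Sym2.map r e ∉ H.edgeSet := by
  induction e with
  | _ i j =>
    intro h
    have : c (r i) = c (r j) := g.col _ _ h
    rw [g.root, g.root] at this
    exact (show K.Adj i j from he).ne this

end IsGlued

lemma subset_edgeSet_of_mem_cycleEdgeSets {V : Type*} {G : SimpleGraph V} {s : Set (Sym2 V)}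
    (h : s ∈ cycleEdgeSets G) : s ⊆ G.edgeSet := by
  obtain ⟨u, q, -, rfl⟩ := h
  exact fun e he => q.edges_subset_edgeSet he

lemma nonempty_of_mem_cycleEdgeSets {V : Type*} {G : SimpleGraph V} {s : Set (Sym2 V)}
    (h : s ∈ cycleEdgeSets G) : s.Nonempty := by
  obtain ⟨u, q, hq, rfl⟩ := h
  cases q with
  | nil => simp at hq
  | cons hw p => exact ⟨_, List.mem_cons_self⟩

namespace IsGlued

variable {V ι : Type*} {G H : SimpleGraph V} {K : SimpleGraph ι} {r : ι → V} {c : V → ι}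

lemma cycleEdgeSets_eq_insert (g : IsGlued G H K r c) {t : Set (Sym2 ι)}
    (hK : cycleEdgeSets K = {t}) :
    cycleEdgeSets G = insert (Sym2.map r '' t) (cycleEdgeSets H) := by
  ext s
  rw [g.mem_cycleEdgeSets_iff, hK, Set.mem_insert_iff]
  simp [or_comm]

lemma disjoint_of_mem_cycleEdgeSets (g : IsGlued G H K r c) {t : Set (Sym2 ι)}
    (hK : cycleEdgeSets K = {t}) {s : Set (Sym2 V)} (hs : s ∈ cycleEdgeSets H) :
    Disjoint (Sym2.map r '' t) s := by
  rw [Set.disjoint_left]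
  rintro _ ⟨e, he, rfl⟩ h
  exact g.map_notMem_edgeSet
    (subset_edgeSet_of_mem_cycleEdgeSets (hK ▸ Set.mem_singleton t) he)
    (subset_edgeSet_of_mem_cycleEdgeSets hs h)

lemma ncard_cycleEdgeSets [Finite V] (g : IsGlued G H K r c) {t : Set (Sym2 ι)}
    (hK : cycleEdgeSets K = {t}) :
    (cycleEdgeSets G).ncard = (cycleEdgeSets H).ncard + 1 := by
  rw [g.cycleEdgeSets_eq_insert hK, Set.ncard_insert_of_notMem _ (Set.toFinite _)]
  intro h
  have h1 := g.disjoint_of_mem_cycleEdgeSets hK h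
  rw [disjoint_self] at h1
  exact (nonempty_of_mem_cycleEdgeSets h).ne_empty h1

lemma isCactus (g : IsGlued G H K r c) {t : Set (Sym2 ι)} (hK : cycleEdgeSets K = {t})
    (hH : (cycleEdgeSets H).Pairwise Disjoint) : IsCactus G := by
  refine ⟨g.connected, ?_⟩
  rw [g.cycleEdgeSets_eq_insert hK]
  exact hH.insert fun s hs _ => ⟨g.disjoint_of_mem_cycleEdgeSets hK hs,
    (g.disjoint_of_mem_cycleEdgeSets hK hs).symm⟩

end IsGlued

/-! ### The cycle of length `l` -/

/-- The cycle graph on `{0, …, l - 1}` (for `3 ≤ l`), with adjacency spelled out so that it is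
accessible to linear arithmetic over `ℕ`. -/
def cyc (l : ℕ) : SimpleGraph (Fin l) where
  Adj i j := i ≠ j ∧ (i.val + 1 = j ∨ j.val + 1 = i ∨ (i.val + 1 = l ∧ j.val = 0) ∨
    (j.val + 1 = l ∧ i.val = 0))
  symm := ⟨fun i j h => ⟨h.1.symm, by omega⟩⟩
  loopless := ⟨fun i h => h.1 rfl⟩

lemma cyc_adj {l : ℕ} (hl : 3 ≤ l) (i j : Fin l) : (cyc l).Adj i j ↔
    (i.val + 1 = j ∨ j.val + 1 = i ∨ (i.val + 1 = l ∧ j.val = 0) ∨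
    (j.val + 1 = l ∧ i.val = 0)) := by
  refine ⟨fun h => h.2, fun h => ⟨?_, h⟩⟩
  rintro rfl
  omega

/-- Every vertex has exactly two neighbours, its cyclic successor and predecessor. -/
lemma cyc_exists_next_prev {l : ℕ} (hl : 3 ≤ l) (x : Fin l) :
    ∃ nx px : Fin l, nx ≠ px ∧ (nx.val = x + 1 ∨ x.val + 1 = l ∧ nx.val = 0) ∧
      (px.val + 1 = x ∨ x.val = 0 ∧ px.val + 1 = l) ∧
      ∀ w, (cyc l).Adj x w ↔ w = nx ∨ w = px := by
  have hx := x.2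
  obtain ⟨nx, hnx⟩ : ∃ n : Fin l, n.val = x + 1 ∨ x.val + 1 = l ∧ n.val = 0 := by
    by_cases h : x.val + 1 = l
    · exact ⟨⟨0, by omega⟩, .inr ⟨h, rfl⟩⟩
    · exact ⟨⟨x + 1, by omega⟩, .inl rfl⟩
  obtain ⟨px, hpx⟩ : ∃ n : Fin l, n.val + 1 = x ∨ x.val = 0 ∧ n.val + 1 = l := by
    by_cases h : x.val = 0
    · exact ⟨⟨l - 1, by omega⟩, .inr ⟨h, Nat.sub_add_cancel (by omega)⟩⟩
    · exact ⟨⟨x - 1, by omega⟩, .inl (Nat.sub_add_cancel (by omega))⟩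
  refine ⟨nx, px, ?_, hnx, hpx, fun w => ?_⟩
  · rw [ne_eq, Fin.ext_iff]
    omega
  · rw [cyc_adj hl, Fin.ext_iff, Fin.ext_iff]
    have := w.2
    have := nx.2
    have := px.2
    omega

/-- The number of forward steps from `x` to `j` along the cycle. -/
def cycSteps {l : ℕ} (x j : Fin l) : ℕ := if x.val ≤ j then j.val - x else j.val + l - x

/-- The defining property of `cycSteps`, free of truncated subtraction. -/
lemma cycSteps_spec {l : ℕ} (x j : Fin l) :
    x.val ≤ j ∧ cycSteps x j + x = j ∨ j.val < x ∧ cycSteps x j + x = j + l := by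
  unfold cycSteps
  have := x.2
  split_ifs <;> omega

open Classical in
lemma cyc_dist_and_numGeodesics {l : ℕ} (hl : 3 ≤ l) (i j : Fin l) :
    (cyc l).dist i j = min (cycSteps i j) (l - cycSteps i j) ∧
    numGeodesics (cyc l) i j = if 2 * cycSteps i j = l then 2 else 1 := by
  have hself : cycSteps j j = 0 := by simp [cycSteps]
  have hlt : ∀ x : Fin l, cycSteps x j < l := by
    intro x
    have := cycSteps_spec x j
    omega
  have hstep : ∀ x : Fin l, ∃ nx px : Fin l, nx ≠ px ∧
      (∀ w, (cyc l).Adj x w ↔ w = nx ∨ w = px) ∧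
      (x ≠ j → cycSteps x j ≠ 0 ∧ cycSteps nx j + 1 = cycSteps x j) ∧
      (cycSteps px j = cycSteps x j + 1 ∨ cycSteps x j + 1 = l ∧ cycSteps px j = 0) := by
    intro x
    obtain ⟨nx, px, hnp, hnx, hpx, hadj⟩ := cyc_exists_next_prev hl x
    have sx := cycSteps_spec x j
    have sn := cycSteps_spec nx j
    have sp := cycSteps_spec px j
    have := x.2
    refine ⟨nx, px, hnp, hadj, fun hne => ?_, by omega⟩
    have hne : x.val ≠ j.val := fun h => hne (Fin.ext h)
    omega
  refine dist_and_numGeodesics_of_rec (cyc l) j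
    (fun i => min (cycSteps i j) (l - cycSteps i j))
    (fun i => if 2 * cycSteps i j = l then 2 else 1)
    (by simp [hself]) ?_ ?_ ?_ ?_ i
  · simp only [hself]
    rw [if_neg (by omega)]
  · intro x w h
    by_cases hx : x = j
    · simp [hx, hself]
    · obtain ⟨nx, px, hnp, hadj, hn, hp⟩ := hstep x
      have := hn hx
      have := hlt x
      rcases (hadj w).1 h with rfl | rfl <;> omega
  · intro x hxj
    obtain ⟨nx, px, hnp, hadj, hn, hp⟩ := hstep x
    have := hn hxj
    have := hlt x
    by_cases h : 2 * cycSteps x j ≤ l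
    · exact ⟨nx, (hadj _).2 (.inl rfl), by omega⟩
    · exact ⟨px, (hadj _).2 (.inr rfl), by omega⟩
  · intro x hxj
    obtain ⟨nx, px, hnp, hadj, hn, hp⟩ := hstep x
    obtain ⟨h0, hn⟩ := hn hxj
    have := hlt x
    have key : (Finset.univ.filter fun w : Fin l => (cyc l).Adj x w ∧
        min (cycSteps w j) (l - cycSteps w j) + 1 = min (cycSteps x j) (l - cycSteps x j)) =
        ({nx, px} : Finset (Fin l)).filter fun w =>
        min (cycSteps w j) (l - cycSteps w j) + 1 = min (cycSteps x j) (l - cycSteps x j) := by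
      ext w
      simp [hadj]
    rw [key, Finset.sum_filter, Finset.sum_pair hnp]
    by_cases hh : 2 * cycSteps x j ≤ l
    · have e1 : min (cycSteps nx j) (l - cycSteps nx j) + 1 =
          min (cycSteps x j) (l - cycSteps x j) := by omega
      rw [if_pos e1, if_neg (show ¬ 2 * cycSteps nx j = l by omega)]
      by_cases he : 2 * cycSteps x j = l
      · have e2 : min (cycSteps px j) (l - cycSteps px j) + 1 =
            min (cycSteps x j) (l - cycSteps x j) := by omega
        rw [if_pos he, if_pos e2, if_neg (show ¬ 2 * cycSteps px j = l by omega)]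
      · have e2 : ¬ min (cycSteps px j) (l - cycSteps px j) + 1 =
            min (cycSteps x j) (l - cycSteps x j) := by omega
        rw [if_neg he, if_neg e2, add_zero]
    · have e1 : ¬ min (cycSteps nx j) (l - cycSteps nx j) + 1 =
          min (cycSteps x j) (l - cycSteps x j) := by omega
      have e2 : min (cycSteps px j) (l - cycSteps px j) + 1 =
          min (cycSteps x j) (l - cycSteps x j) := by omega
      rw [if_neg (show ¬ 2 * cycSteps x j = l by omega), if_neg e1, if_pos e2,
        if_neg (show ¬ 2 * cycSteps px j = l by omega)]

lemma cyc_connected {l : ℕ} (hl : 3 ≤ l) : (cyc l).Connected := by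
  refine (SimpleGraph.connected_iff _).2 ⟨fun i j => ?_, ⟨⟨0, by omega⟩⟩⟩
  by_cases h : i = j
  · exact h ▸ .refl _
  · apply SimpleGraph.Reachable.of_dist_ne_zero
    rw [(cyc_dist_and_numGeodesics hl i j).1]
    rw [Fin.ext_iff] at h
    have := cycSteps_spec i j
    have := i.2
    have := j.2
    omega

lemma cyc_exists_isCycle {l : ℕ} (hl : 3 ≤ l) :
    ∃ (u : Fin l) (p : (cyc l).Walk u u), p.IsCycle := by
  obtain ⟨a, ha⟩ : ∃ a : Fin l, a.val = 0 := ⟨⟨0, by omega⟩, rfl⟩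
  obtain ⟨b, hb⟩ : ∃ b : Fin l, b.val = l - 1 := ⟨⟨l - 1, by omega⟩, rfl⟩
  have hab : (cyc l).Adj a b := (cyc_adj hl _ _).2 (by omega)
  have hreach : ∀ n (hn : n < l), ((cyc l) \ SimpleGraph.fromEdgeSet {s(a, b)}).Reachable a
      ⟨n, hn⟩ := by
    intro n
    induction n with
    | zero =>
      intro hn
      rw [show a = ⟨0, hn⟩ from Fin.ext ha]
    | succ n ih =>
      intro hn
      refine (ih (by omega)).trans (SimpleGraph.Adj.reachable ?_)
      simp only [SimpleGraph.sdiff_adj, SimpleGraph.fromEdgeSet_adj, cyc_adj hl,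
        Set.mem_singleton_iff, Sym2.eq_iff, Fin.ext_iff, ha, hb]
      refine ⟨.inl trivial, ?_⟩
      rintro ⟨h, -⟩
      omega
  obtain ⟨u, p, hp, -⟩ := SimpleGraph.adj_and_reachable_delete_edges_iff_exists_cycle.1
    ⟨hab, (show b = ⟨l - 1, by omega⟩ from Fin.ext hb) ▸ hreach (l - 1) (by omega)⟩
  exact ⟨u, p, hp⟩

/-- The first and the last edge of a cycle are distinct edges at its base point. -/
lemma exists_two_edges_of_isCycle {V : Type*} [DecidableEq V] {G : SimpleGraph V} {u v : V}
    (p : G.Walk u u) (hp : p.IsCycle) (hv : v ∈ p.support) :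
    ∃ w₁ w₂, w₁ ≠ w₂ ∧ s(v, w₁) ∈ p.edges ∧ s(v, w₂) ∈ p.edges := by
  have hq := hp.rotate hv
  have hperm := (p.rotate_edges v hv).perm
  refine ⟨(p.rotate v hv).snd, (p.rotate v hv).penultimate, hq.snd_ne_penultimate, ?_, ?_⟩
  · exact hperm.mem_iff.1 (SimpleGraph.Walk.mk_start_snd_mem_edges hq.not_nil)
  · rw [Sym2.eq_swap]
    exact hperm.mem_iff.1 (SimpleGraph.Walk.mk_penultimate_end_mem_edges hq.not_nil)

lemma cycleEdgeSets_cyc {l : ℕ} (hl : 3 ≤ l) : cycleEdgeSets (cyc l) = {(cyc l).edgeSet} := by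
  have key : ∀ (u : Fin l) (p : (cyc l).Walk u u), p.IsCycle →
      {e | e ∈ p.edges} = (cyc l).edgeSet := by
    intro u p hp
    -- both edges at a vertex of `p` lie on `p`, as the graph is 2-regular
    have hnb : ∀ v ∈ p.support, ∀ w, (cyc l).Adj v w → s(v, w) ∈ p.edges := by
      intro v hv w hw
      obtain ⟨w₁, w₂, hne, h₁, h₂⟩ := exists_two_edges_of_isCycle p hp hv
      have a₁ := p.adj_of_mem_edges h₁
      have a₂ := p.adj_of_mem_edges h₂
      have : w = w₁ ∨ w = w₂ := by
        obtain ⟨nx, px, -, -, -, hadj⟩ := cyc_exists_next_prev hl v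
        rw [hadj] at hw a₁ a₂
        grind
      rcases this with rfl | rfl
      · exact h₁
      · exact h₂
    have hall : ∀ {v w : Fin l}, (cyc l).Walk v w → v ∈ p.support → w ∈ p.support := by
      intro v w q
      induction q with
      | nil => exact id
      | cons h q ih =>
        exact fun hv => ih (p.snd_mem_support_of_mem_edges (hnb _ hv _ h))
    refine Set.Subset.antisymm (fun e he => p.edges_subset_edgeSet he) fun e he => ?_
    induction e with
    | _ v w =>
      obtain ⟨q⟩ := cyc_connected hl u v
      exact hnb v (hall q p.start_mem_support) w he
  ext s
  constructor
  · rintro ⟨u, p, hp, rfl⟩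
    exact key u p hp
  · rintro rfl
    obtain ⟨u, p, hp⟩ := cyc_exists_isCycle hl
    exact ⟨u, p, hp, (key u p hp).symm⟩

/-! ### Replacing a long cycle by a square with pendant vertices -/

/-- The star forest whose stars are the fibres of `g`, the star over `a` having centre
`rep a`. -/
def starForest {ι κ : Type*} (g : ι → κ) (rep : κ → ι) : SimpleGraph ι where
  Adj i j := i ≠ j ∧ g i = g j ∧ (i = rep (g i) ∨ j = rep (g j))
  symm := ⟨fun _ _ h => ⟨h.1.symm, h.2.1.symm, h.2.2.symm⟩⟩
  loopless := ⟨fun _ h => h.1 rfl⟩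

/-- A star forest has no cycles, as every edge has an end of degree one. -/
lemma cycleEdgeSets_starForest {ι κ : Type*} (g : ι → κ) (rep : κ → ι) :
    cycleEdgeSets (starForest g rep) = ∅ := by
  classical
  rw [Set.eq_empty_iff_forall_notMem]
  rintro s ⟨u, p, hp, rfl⟩
  have key : ∀ v ∈ p.support, v = rep (g v) := by
    intro v hv
    by_contra hne
    obtain ⟨w₁, w₂, hw, h₁, h₂⟩ := exists_two_edges_of_isCycle p hp hv
    obtain ⟨-, e₁, h₁⟩ := p.adj_of_mem_edges h₁
    obtain ⟨-, e₂, h₂⟩ := p.adj_of_mem_edges h₂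
    apply hw
    rw [h₁.resolve_left hne, h₂.resolve_left hne, ← e₁, ← e₂]
  obtain ⟨w, -, -, h, -⟩ := exists_two_edges_of_isCycle p hp p.start_mem_support
  obtain ⟨hne, e, -⟩ := p.adj_of_mem_edges h
  apply hne
  rw [key u p.start_mem_support, key w (p.snd_mem_support_of_mem_edges h), e]

/-- On the vertices of a cycle of length at least `5` there is a connected graph with just one
cycle in which no number of geodesics drops and one of them grows: a square with pendant vertices
attached to two opposite corners. The blocks `[0, h - 2]`, `{h - 1}`, `[h, l - 2]`, `{l - 1}`
for `h = l / 2` are attached to the four corners, so that antipodal vertices of the cycle end up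
at opposite corners. -/
lemma exists_unicyclic_more_geodesics {l : ℕ} (hl : 5 ≤ l) :
    ∃ (K : SimpleGraph (Fin l)) (t : Set (Sym2 (Fin l))), K.Connected ∧ cycleEdgeSets K = {t} ∧
      (∀ i j, numGeodesics (cyc l) i j ≤ numGeodesics K i j) ∧
      ∃ i j, i ≠ j ∧ numGeodesics (cyc l) i j < numGeodesics K i j := by
  obtain ⟨h, hh⟩ : ∃ h, 2 * h = l ∨ 2 * h + 1 = l := ⟨l / 2, by omega⟩
  have hg : ∀ i : Fin l, ∃ a : Fin 4, i.val + 1 < h ∧ a.val = 0 ∨ i.val + 1 = h ∧ a.val = 1 ∨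
      h ≤ i.val ∧ i.val + 1 < l ∧ a.val = 2 ∨ i.val + 1 = l ∧ a.val = 3 := by
    intro i
    have := i.2
    by_cases h1 : i.val + 1 < h
    · exact ⟨0, .inl ⟨h1, rfl⟩⟩
    by_cases h2 : i.val + 1 = h
    · exact ⟨1, .inr (.inl ⟨h2, rfl⟩)⟩
    by_cases h3 : i.val + 1 < l
    · exact ⟨2, .inr (.inr (.inl ⟨by omega, h3, rfl⟩))⟩
    · exact ⟨3, .inr (.inr (.inr ⟨by omega, rfl⟩))⟩
  choose g hg using hg
  have hrep : ∀ a : Fin 4, ∃ i : Fin l, a.val = 0 ∧ i.val = 0 ∨ a.val = 1 ∧ i.val + 1 = h ∨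
      a.val = 2 ∧ i.val = h ∨ a.val = 3 ∧ i.val + 1 = l := by
    intro a
    fin_cases a
    · exact ⟨⟨0, by omega⟩, by simp⟩
    · exact ⟨⟨h - 1, by omega⟩, by simp; omega⟩
    · exact ⟨⟨h, by omega⟩, by simp⟩
    · exact ⟨⟨l - 1, by omega⟩, by simp; omega⟩
  choose rep hrep using hrep
  have hroot : ∀ a, g (rep a) = a := by
    intro a
    have := hrep a
    have := hg (rep a)
    rw [Fin.ext_iff]
    omega
  obtain ⟨K, hK⟩ := IsGlued.exists_glued (H := starForest g rep) (K := cyc 4) (r := rep) (c := g)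
    hroot (fun _ _ h => h.2.1) (fun i => by
      by_cases hi : i = rep (g i)
      · rw [← hi]
      · exact SimpleGraph.Adj.reachable ⟨hi, (hroot _).symm, .inr (by rw [hroot])⟩)
    (cyc_connected (by norm_num))
  -- vertices attached to opposite corners of the square are joined by two geodesics
  have hopp : ∀ i j, 2 * cycSteps (g i) (g j) = 4 → 2 ≤ numGeodesics K i j := by
    intro i j hij
    have hne : g i ≠ g j := by
      intro h
      rw [h] at hij
      simp [cycSteps] at hij
    rw [(hK.dist_and_numGeodesics i j).2, if_neg hne,
      (cyc_dist_and_numGeodesics (by norm_num) _ _).2, if_pos hij]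
    have h1 := numGeodesics_pos _ (hK.reach i)
    have h2 := numGeodesics_pos _ (hK.reach j).symm
    exact le_mul_of_le_of_one_le (Nat.le_mul_of_pos_left 2 h1) h2
  refine ⟨K, _, hK.connected, by rw [hK.cycleEdgeSets_eq_insert (cycleEdgeSets_cyc (by norm_num)),
    cycleEdgeSets_starForest, insert_empty_eq], fun i j => ?_, ⟨0, by omega⟩, ⟨h + 1, by omega⟩,
    by simp, ?_⟩
  · rw [(cyc_dist_and_numGeodesics (by omega) _ _).2]
    split_ifs with hij
    · apply hopp
      have := hg i
      have := hg j
      have := cycSteps_spec i j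
      have := cycSteps_spec (g i) (g j)
      omega
    · exact numGeodesics_pos _ (hK.connected i j)
  · -- the vertices `0` and `h + 1` are not antipodal, but belong to opposite corners
    set i : Fin l := ⟨0, by omega⟩
    set j : Fin l := ⟨h + 1, by omega⟩
    have hi : i.val = 0 := rfl
    have hj : j.val = h + 1 := rfl
    rw [(cyc_dist_and_numGeodesics (by omega) _ _).2, if_neg]
    · apply hopp
      have := hg i
      have := hg j
      have := cycSteps_spec (g i) (g j)
      omega
    · have := cycSteps_spec i j
      omega

/-! ### Splitting a cactus along a cycle -/

/-- The edges of a cycle, listed along the cycle, are pairwise distinct. -/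
lemma getVert_edge_ne {V : Type*} {G : SimpleGraph V} {u : V} {c : G.Walk u u} (hc : c.IsCycle)
    {k m : ℕ} (hk : k < c.length) (hm : m < c.length) (hkm : k ≠ m) :
    s(c.getVert k, c.getVert (k + 1)) ≠ s(c.getVert m, c.getVert (m + 1)) := by
  wlog h : k < m generalizing k m
  · exact (this hm hk hkm.symm (by omega)).symm
  have hl := hc.three_le_length
  have hclose : c.getVert c.length = c.getVert 0 := by rw [c.getVert_length, c.getVert_zero]
  have inj : ∀ a b, a < c.length → b < c.length → c.getVert a = c.getVert b → a = b :=
    fun a b ha hb e => hc.getVert_injOn' (show a ≤ c.length - 1 by omega)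
      (show b ≤ c.length - 1 by omega) e
  intro e
  rw [Sym2.eq_iff] at e
  obtain ⟨e, -⟩ | ⟨e, e'⟩ := e
  · exact hkm (inj _ _ hk hm e)
  · have h1 := inj _ _ (by omega) hm e'
    by_cases h2 : m + 1 < c.length
    · have := inj _ _ hk h2 e
      omega
    · rw [show m + 1 = c.length by omega, hclose] at e
      have := inj _ _ hk (by omega) e
      omega

/-- In a cactus, removing the edges of a cycle separates any two of its vertices: otherwise, with
`e` and `e'` the edges of the cycle following the two vertices, there would be a further cycle
through `e'` which avoids `e`. -/
lemma not_reachable_deleteEdges_cycle {V : Type*} {G : SimpleGraph V} (hG : IsCactus G) {u : V}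
    {c : G.Walk u u} (hc : c.IsCycle) {i j : ℕ} (hij : i < j) (hj : j < c.length) :
    ¬ (G.deleteEdges {e | e ∈ c.edges}).Reachable (c.getVert i) (c.getVert j) := by
  intro hr
  set f := c.getVert with hf
  set e := s(f i, f (i + 1)) with he
  set e' := s(f j, f (j + 1)) with he'
  have hmem : ∀ k, k < c.length → s(f k, f (k + 1)) ∈ c.edges := fun k hk =>
    (SimpleGraph.Walk.mk_mem_edges_iff_exists _).2 ⟨k, hk, rfl⟩
  have hne : e' ≠ e := getVert_edge_ne hc hj (by omega) (by omega)
  set G1 := G.deleteEdges {e} with hG1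
  have hstep : ∀ k, k < c.length → k ≠ i → k ≠ j →
      (G1.deleteEdges {e'}).Adj (f k) (f (k + 1)) := by
    intro k hk hi hj'
    simp only [hG1, SimpleGraph.deleteEdges_adj, Set.mem_singleton_iff]
    exact ⟨⟨c.adj_getVert_succ hk, getVert_edge_ne hc hk (by omega) hi⟩,
      getVert_edge_ne hc hk (by omega) hj'⟩
  have harc : ∀ a b, a ≤ b → b ≤ c.length → (∀ k, a ≤ k → k < b → k ≠ i ∧ k ≠ j) →
      (G1.deleteEdges {e'}).Reachable (f a) (f b) := by
    intro a b hab
    induction b, hab using Nat.le_induction with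
    | base => exact fun _ _ => .refl _
    | succ b hab ih =>
      intro hb hk
      have := hk b hab (by omega)
      exact (ih (by omega) fun k h1 h2 => hk k h1 (by omega)).trans
        (hstep b (by omega) this.1 this.2).reachable
  have h1 : (G1.deleteEdges {e'}).Reachable (f i) (f j) := by
    refine hr.mono fun x y h => ?_
    simp only [hG1, SimpleGraph.deleteEdges_adj, Set.mem_singleton_iff, Set.mem_ofPred_eq] at h ⊢
    refine ⟨⟨h.1, fun h' => h.2 (h' ▸ hmem i (by omega))⟩, fun h' => h.2 (h' ▸ hmem j hj)⟩
  have h2 := harc 0 i (by omega) (by omega) (by omega)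
  have h3 := harc (j + 1) c.length (by omega) le_rfl (by omega)
  have h4 : f 0 = f c.length := by rw [hf, c.getVert_zero, c.getVert_length]
  have h5 : G1.Adj (f j) (f (j + 1)) := by
    simp only [hG1, SimpleGraph.deleteEdges_adj, Set.mem_singleton_iff]
    exact ⟨c.adj_getVert_succ hj, hne⟩
  obtain ⟨v, q, hq, hqe⟩ := SimpleGraph.adj_and_reachable_delete_edges_iff_exists_cycle.1
    ⟨h5, h1.symm.trans (h2.symm.trans (h4 ▸ h3.symm))⟩
  have hle : G1 ≤ G := SimpleGraph.deleteEdges_le _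
  have hq' : (q.mapLe hle).IsCycle := hq.mapLe hle
  have heq : {x | x ∈ c.edges} = {x | x ∈ (q.mapLe hle).edges} := by
    by_contra hne
    refine Set.disjoint_left.1 (hG.2 ⟨u, c, hc, rfl⟩ ⟨v, _, hq', rfl⟩ hne) (hmem j hj) ?_
    simpa using hqe
  have : e ∈ {x | x ∈ (q.mapLe hle).edges} := heq ▸ hmem i (by omega)
  have : e ∈ q.edges := by simpa using this
  have := q.edges_subset_edgeSet this
  rw [hG1, SimpleGraph.edgeSet_deleteEdges] at this
  exact this.2 rfl

/-- A cactus is glued along any of its cycles `c`: remove the edges of `c`, take the vertices of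
`c` as roots, and send a vertex to the index of the root it is still connected to. -/
lemma exists_isGlued_of_isCycle {V : Type*} {G : SimpleGraph V} (hG : IsCactus G) {u : V}
    {c : G.Walk u u} (hc : c.IsCycle) :
    ∃ (H : SimpleGraph V) (r : Fin c.length → V) (col : V → Fin c.length),
      IsGlued G H (cyc c.length) r col := by
  have hl := hc.three_le_length
  have hclose : c.getVert c.length = c.getVert 0 := by rw [c.getVert_length, c.getVert_zero]
  set H := G.deleteEdges {e | e ∈ c.edges} with hH
  have hadjH : ∀ x y, H.Adj x y ↔ G.Adj x y ∧ s(x, y) ∉ c.edges := fun x y => by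
    simp [hH, SimpleGraph.deleteEdges_adj]
  set r : Fin c.length → V := fun i => c.getVert i with hr
  -- consecutive vertices of `c`, with the index `c.length` wrapped around to `0`
  have hwrap : ∀ k, k < c.length → ∃ a b : Fin c.length, r a = c.getVert k ∧
      r b = c.getVert (k + 1) ∧ (cyc c.length).Adj a b := by
    intro k hk
    by_cases h : k + 1 < c.length
    · exact ⟨⟨k, hk⟩, ⟨k + 1, h⟩, rfl, rfl, (cyc_adj hl _ _).2 (.inl rfl)⟩
    · have : k + 1 = c.length := by omega
      refine ⟨⟨k, hk⟩, ⟨0, by omega⟩, rfl, ?_, (cyc_adj hl _ _).2 (.inr (.inr (.inl ⟨this, rfl⟩)))⟩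
      rw [this, hclose]
  have hedge : ∀ x y, s(x, y) ∈ c.edges → ∃ a b : Fin c.length, r a = x ∧ r b = y ∧
      (cyc c.length).Adj a b := by
    intro x y h
    obtain ⟨k, hk, e⟩ := (SimpleGraph.Walk.mk_mem_edges_iff_exists _).1 h
    obtain ⟨a, b, ha, hb, hab⟩ := hwrap k hk
    rw [← ha, ← hb, Sym2.eq_iff] at e
    obtain ⟨rfl, rfl⟩ | ⟨rfl, rfl⟩ := e
    · exact ⟨a, b, rfl, rfl, hab⟩
    · exact ⟨b, a, rfl, rfl, hab.symm⟩
  have hadj : ∀ a b, (cyc c.length).Adj a b → G.Adj (r a) (r b) := by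
    have hlast : ∀ a b : Fin c.length, a.val + 1 = c.length → b.val = 0 → G.Adj (r a) (r b) := by
      intro a b ha hb
      have := c.adj_getVert_succ a.2
      rw [ha, hclose, ← hb] at this
      exact this
    intro a b hab
    obtain h | h | ⟨h1, h2⟩ | ⟨h1, h2⟩ := (cyc_adj hl _ _).1 hab
    · have := c.adj_getVert_succ a.2
      rwa [h] at this
    · have := c.adj_getVert_succ b.2
      rw [h] at this
      exact this.symm
    · exact hlast a b h1 h2
    · exact (hlast b a h1 h2).symm
  have hex : ∀ x, ∃ i, H.Reachable x (r i) := by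
    have hwalk : ∀ {x y}, G.Walk x y → ∀ j, r j = y → ∃ i, H.Reachable x (r i) := by
      intro x y p j hj
      induction p with
      | nil => exact ⟨j, hj ▸ .refl _⟩
      | @cons x w y hw p ih =>
        obtain ⟨i, hi⟩ := ih hj
        by_cases h : s(x, w) ∈ c.edges
        · obtain ⟨a, -, ha, -⟩ := hedge _ _ h
          exact ⟨a, ha ▸ .refl _⟩
        · exact ⟨i, ((hadjH _ _).2 ⟨hw, h⟩).reachable.trans hi⟩
    intro x
    obtain ⟨p⟩ := hG.1 x u
    exact hwalk p ⟨0, by omega⟩ c.getVert_zero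
  have huniq : ∀ i j, H.Reachable (r i) (r j) → i = j := by
    intro i j h
    by_contra hne
    obtain h' | h' := lt_or_gt_of_ne hne
    · exact not_reachable_deleteEdges_cycle hG hc h' j.2 h
    · exact not_reachable_deleteEdges_cycle hG hc h' i.2 h.symm
  choose col hcol using hex
  have hroot : ∀ i, col (r i) = i := fun i => (huniq _ _ (hcol (r i))).symm
  refine ⟨H, r, col, hroot, fun x y h => huniq _ _
    ((hcol x).symm.trans (h.reachable.trans (hcol y))), hcol, fun x y => ⟨fun h => ?_, ?_⟩,
    cyc_connected hl⟩
  · by_cases he : s(x, y) ∈ c.edges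
    · obtain ⟨a, b, rfl, rfl, hab⟩ := hedge _ _ he
      exact .inr (by simpa only [hroot, and_true] using hab)
    · exact .inl ((hadjH _ _).2 ⟨h, he⟩)
  · rintro (h | ⟨h, hx, hy⟩)
    · exact ((hadjH _ _).1 h).1
    · rw [hx, hy]
      exact hadj _ _ h

/-! ### Improving a cactus, and the extremal argument -/

/-- Geodesic numbers that do not drop anywhere and grow at one pair increase `gpn`. -/
lemma gpn_lt_gpn {V : Type*} [Fintype V] [DecidableEq V] {G G' : SimpleGraph V}
    (hle : ∀ x y, numGeodesics G x y ≤ numGeodesics G' x y) {a b : V} (hab : a ≠ b)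
    (hlt : numGeodesics G a b < numGeodesics G' a b) : gpn G < gpn G' := by
  refine Nat.add_lt_add_right (Finset.sum_lt_sum (fun e _ => ?_) ⟨s(a, b), ?_, hlt⟩) _
  · induction e with
    | _ x y => exact hle x y
  · simpa using hab

/-- A cactus which is not girth restricted can be improved, by replacing a cycle of length at
least `5` by a square with pendant vertices and reattaching the rest of the cactus. -/
lemma exists_gpn_lt_of_not_isGirthRestricted {V : Type*} [Fintype V] [DecidableEq V]
    {G : SimpleGraph V} (hG : IsCactus G) (hngr : ¬ IsGirthRestricted G) :
    ∃ G' : SimpleGraph V, IsCactus G' ∧ (cycleEdgeSets G').ncard = (cycleEdgeSets G).ncard ∧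
      gpn G < gpn G' := by
  unfold IsGirthRestricted at hngr
  push Not at hngr
  obtain ⟨u, c, hc, h3, h4⟩ := hngr
  have hl := hc.three_le_length
  obtain ⟨H, r, col, g⟩ := exists_isGlued_of_isCycle hG hc
  obtain ⟨K, t, hconn, hK, hle, i, j, hij, hlt⟩ :=
    exists_unicyclic_more_geodesics (l := c.length) (by omega)
  obtain ⟨G', g'⟩ := IsGlued.exists_glued g.root g.col g.reach hconn
  have hcyc := cycleEdgeSets_cyc hl
  have hH : (cycleEdgeSets H).Pairwise Disjoint := by
    refine hG.2.mono ?_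
    rw [g.cycleEdgeSets_eq_insert hcyc]
    exact Set.subset_insert _ _
  refine ⟨G', g'.isCactus hK hH, ?_, gpn_lt_gpn (fun x y => ?_) (g.injective.ne hij) ?_⟩
  · rw [g'.ncard_cycleEdgeSets hK, g.ncard_cycleEdgeSets hcyc]
  · rw [(g.dist_and_numGeodesics x y).2, (g'.dist_and_numGeodesics x y).2]
    split_ifs
    · exact le_rfl
    · gcongr
      exact hle _ _
  · rw [(g.dist_and_numGeodesics _ _).2, (g'.dist_and_numGeodesics _ _).2, g.root, g.root,
      if_neg hij, if_neg hij]
    simpa [numGeodesics_self] using hlt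

/-- if a cactus `G` on `n` vertices with `k` cycles is not girth
restricted, then some girth restricted cactus `G'` on `n` vertices with `k` cycles
has a strictly larger geodesic subpath number. -/
theorem cactus_not_girthRestricted_not_maximal {V : Type*} [Fintype V] [DecidableEq V]
    (G : SimpleGraph V) (k : ℕ) (hG : IsCactus G) (hk : (cycleEdgeSets G).ncard = k)
    (hngr : ¬ IsGirthRestricted G) :
    ∃ G' : SimpleGraph V, IsCactus G' ∧ IsGirthRestricted G' ∧
      (cycleEdgeSets G').ncard = k ∧ gpn G < gpn G' := by
  obtain ⟨M, ⟨hM, hMk⟩, hmax⟩ := Set.exists_max_image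
    {G : SimpleGraph V | IsCactus G ∧ (cycleEdgeSets G).ncard = k} gpn (Set.toFinite _)
    ⟨G, hG, hk⟩
  refine ⟨M, hM, ?_, hMk, ?_⟩
  · -- a cactus maximizing `gpn` cannot be improved any further
    by_contra h
    obtain ⟨G', hG', hk', hlt⟩ := exists_gpn_lt_of_not_isGirthRestricted hM h
    exact (hmax G' ⟨hG', hk'.trans hMk⟩).not_gt hlt
  · obtain ⟨G', hG', hk', hlt⟩ := exists_gpn_lt_of_not_isGirthRestricted hG hngr
    exact hlt.trans_le (hmax G' ⟨hG', hk'.trans hk⟩)
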